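/- arXiv:1811.08405 — 2 statements merged into one kernel-verified Lean document; each statement's English description precedes it below -/
import Mathlib

section
/- Assume q ∈ ℂ with q ≠ 0 and q² ≠ 1, and let α, β, γ ∈ ℂ with (β, γ) ≠ (0, 0). Then the cyclic twist matrix K⁽²⁾ = αE₁₃ + βE₂₁ + γE₃₂ satisfies R^H_q(λ)(K⁽²⁾ ⊗ K⁽²⁾) = (K⁽²⁾ ⊗ K⁽²⁾)R^H_q(λ) for all λ ∈ ℂ with λ ≠ 0 if and only if α = 0; the same equivalence holds for K⁽³⁾ = βE₁₂ + γE₂₃ + αE₃₁. -/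
open Matrix Kronecker BigOperators

/-- Elementary 3×3 matrices `E i j`. -/
noncomputable def Eb (i j : Fin 3) : Matrix (Fin 3) (Fin 3) ℂ :=
  Matrix.single i j 1

/-- Principal gradation trigonometric R-matrix of `U_q(gl₃^)`, with spectral
parameter `λ = u³` parametrized by the cube root `u`. -/
noncomputable def RpM (q u : ℂ) : Matrix (Fin 3 × Fin 3) (Fin 3 × Fin 3) ℂ :=
  (∑ k : Fin 3, ∑ p : Fin 3,
    if k = p then (u ^ 3 * q - (u ^ 3 * q)⁻¹) • (Eb k k ⊗ₖ Eb k k)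
    else (u ^ 3 - (u ^ 3)⁻¹) • (Eb k k ⊗ₖ Eb p p))
  + (q - q⁻¹) • ∑ k : Fin 3, ∑ p : Fin 3,
      (if k < p then
        u ^ ((3 : ℤ) - 2 * (((p : ℕ) : ℤ) - ((k : ℕ) : ℤ))) • (Eb k p ⊗ₖ Eb p k)
        + u ^ (2 * (((p : ℕ) : ℤ) - ((k : ℕ) : ℤ)) - (3 : ℤ)) • (Eb p k ⊗ₖ Eb k p)
      else 0)

/-- Homogeneous gradation trigonometric R-matrix of `U_q(gl₃^)`. -/
noncomputable def RhM (q lam : ℂ) : Matrix (Fin 3 × Fin 3) (Fin 3 × Fin 3) ℂ :=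
  (∑ k : Fin 3, ∑ p : Fin 3,
    if k = p then (lam * q - (lam * q)⁻¹) • (Eb k k ⊗ₖ Eb k k)
    else (lam - lam⁻¹) • (Eb k k ⊗ₖ Eb p p))
  + (q - q⁻¹) • ∑ k : Fin 3, ∑ p : Fin 3,
      (if k < p then lam • (Eb k p ⊗ₖ Eb p k) + lam⁻¹ • (Eb p k ⊗ₖ Eb k p) else 0)

/-- Diagonal twist matrix `K⁽¹⁾ = diag(α, β, γ)`. -/
noncomputable def Ktw1 (α β γ : ℂ) : Matrix (Fin 3) (Fin 3) ℂ :=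
  Matrix.diagonal ![α, β, γ]

/-- Cyclic twist matrix `K⁽²⁾ = αE₁₃ + βE₂₁ + γE₃₂`. -/
noncomputable def Ktw2 (α β γ : ℂ) : Matrix (Fin 3) (Fin 3) ℂ :=
  α • Eb 0 2 + β • Eb 1 0 + γ • Eb 2 1

/-- Cyclic twist matrix `K⁽³⁾ = βE₁₂ + γE₂₃ + αE₃₁`. -/
noncomputable def Ktw3 (α β γ : ℂ) : Matrix (Fin 3) (Fin 3) ℂ :=
  β • Eb 0 1 + γ • Eb 1 2 + α • Eb 2 0

/-!
Subtracting the scalar `λ - λ⁻¹` from the homogeneous R-matrix leaves a diagonal matrix times the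
flip of the two tensor factors. The flip commutes with `K ⊗ K`, so `K` is a symmetry exactly when
the diagonal part commutes with `K ⊗ K`. The diagonal entry at `e i ⊗ e j` depends only on whether
`i < j`, `i = j` or `j < i`, and separates these cases once `q ^ 2 ≠ 1` and `λ ^ 2 ≠ 1`. Hence `K`
is a symmetry exactly when any two of its nonzero entries have rows and columns in the same relative
order. In a cyclic twist the corner entry `α` is out of order with both `β` and `γ`.
-/

section CommuteDiagonal

variable {M R n : Type*}

theorem commute_mul_left_iff_of_isUnit [Monoid M] {a b c : M} (hb : IsUnit b)
    (hbc : Commute b c) : Commute (a * b) c ↔ Commute a c := by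
  rw [commute_iff_eq, commute_iff_eq, mul_assoc, hbc.eq, ← mul_assoc, ← mul_assoc,
    hb.mul_left_inj]

theorem commute_diagonal_iff [CommSemiring R] [IsCancelMulZero R] [Fintype n] [DecidableEq n]
    {d : n → R} {A : Matrix n n R} :
    Commute (diagonal d) A ↔ ∀ i j, A i j ≠ 0 → d i = d j := by
  simp only [commute_iff_eq, ← Matrix.ext_iff, diagonal_mul, mul_diagonal]
  refine forall₂_congr fun i j => ?_
  rw [mul_comm, mul_eq_mul_left_iff, or_comm, or_iff_not_imp_left]

end CommuteDiagonal

section Flip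

variable (R n : Type*) [DecidableEq n]

/-- The flip `x ⊗ y ↦ y ⊗ x` of the two tensor factors, as a permutation matrix. -/
def flipMatrix [Zero R] [One R] : Matrix (n × n) (n × n) R :=
  Equiv.Perm.permMatrix R (Equiv.prodComm n n)

variable {R n} [Fintype n]

theorem isUnit_flipMatrix [Semiring R] : IsUnit (flipMatrix R n) :=
  (Group.isUnit (Equiv.prodComm n n : Equiv.Perm (n × n))⁻¹).map permMatrixHom

theorem commute_flipMatrix_kronecker_self [CommSemiring R] (K : Matrix n n R) :
    Commute (flipMatrix R n) (K ⊗ₖ K) := by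
  rw [commute_iff_eq, flipMatrix, PEquiv.toMatrix_toPEquiv_mul, PEquiv.mul_toMatrix_toPEquiv]
  ext ⟨i, j⟩ ⟨k, l⟩
  exact mul_comm (K j k) (K i l)

theorem diagonal_mul_flipMatrix_eq_sum [Semiring R] (d : n × n → R) :
    diagonal d * flipMatrix R n = ∑ i, ∑ j, d (i, j) • (single i j 1 ⊗ₖ single j i 1) := by
  have single_mul_flip (p : n × n) (c : R) :
      single p p c * flipMatrix R n = single p p.swap c := by
    rw [flipMatrix, PEquiv.mul_toMatrix_toPEquiv]
    exact submatrix_single_equiv (Equiv.refl _) (Equiv.prodComm n n).symm p p c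
  simp only [← sum_single_eq_diagonal, Finset.sum_mul, single_mul_flip, Fintype.sum_prod_type,
    Prod.swap_prod_mk, single_kronecker_single, smul_single, smul_eq_mul, mul_one]

end Flip

section OrderedSupport

variable {m n R : Type*} [LinearOrder m] [LinearOrder n] [Zero R]

/-- The support of `K` is the graph of a strictly increasing partial map: any two nonzero entries
have their rows and their columns in the same relative order. -/
def HasStrictMonoSupport (K : Matrix m n R) : Prop :=
  ∀ ⦃i j k l⦄, K i k ≠ 0 → K j l ≠ 0 → cmp i j = cmp k l

theorem hasStrictMonoSupport_transpose_iff {K : Matrix m n R} :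
    HasStrictMonoSupport Kᵀ ↔ HasStrictMonoSupport K :=
  ⟨fun h _ _ _ _ hik hjl => (h hik hjl).symm, fun h _ _ _ _ hik hjl => (h hik hjl).symm⟩

end OrderedSupport

section TrigRMatrix

theorem sub_inv_ne_zero_of_sq_ne_one {D : Type*} [DivisionRing D] {x : D} (hx : x ≠ 0)
    (hx2 : x ^ 2 ≠ 1) : x - x⁻¹ ≠ 0 := by
  rwa [sub_ne_zero, Ne, ← mul_eq_one_iff_eq_inv₀ hx, ← sq]

variable {F ι : Type*} [Field F]

/-- The coefficients of the trigonometric R-matrix in front of the flip, indexed by the relative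
order of the two basis vectors. The value at `eq` is what remains of `λq - (λq)⁻¹` once the
identity matrix is given the coefficient `λ - λ⁻¹`. -/
def flipWeight (q lam : F) : Ordering → F
  | .lt => (q - q⁻¹) * lam
  | .eq => (lam * q - (lam * q)⁻¹) - (lam - lam⁻¹)
  | .gt => (q - q⁻¹) * lam⁻¹

theorem flipWeight_injective {q lam : F} (hq : q ≠ 0) (hq2 : q ^ 2 ≠ 1) (hlam : lam ≠ 0)
    (hlam2 : lam ^ 2 ≠ 1) : Function.Injective (flipWeight q lam) := by
  have hq1 : q - 1 ≠ 0 := fun h => hq2 (by rw [sub_eq_zero.mp h, one_pow])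
  have hqinv := sub_inv_ne_zero_of_sq_ne_one hq hq2
  have hlaminv := sub_inv_ne_zero_of_sq_ne_one hlam hlam2
  have lt_ne_gt : flipWeight q lam .lt ≠ flipWeight q lam .gt := by
    rw [← sub_ne_zero]
    convert mul_ne_zero hqinv hlaminv using 1
    simp only [flipWeight]
    ring
  have lt_ne_eq : flipWeight q lam .lt ≠ flipWeight q lam .eq := by
    rw [← sub_ne_zero]
    convert mul_ne_zero (mul_ne_zero hq1 (inv_ne_zero hq)) hlaminv using 1
    simp only [flipWeight]
    field_simp
    ring
  have eq_ne_gt : flipWeight q lam .eq ≠ flipWeight q lam .gt := by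
    rw [← sub_ne_zero]
    convert mul_ne_zero hq1 hlaminv using 1
    simp only [flipWeight]
    field_simp
    ring
  rintro (_ | _ | _) (_ | _ | _) h <;> grind

variable [LinearOrder ι]

variable (ι) in
/-- The homogeneous gradation trigonometric R-matrix of `U_q(gl_n^)` for a basis of `F ^ n` indexed
by the linear order `ι`, written as a multiple of the identity plus a weighted flip. -/
def trigRMatrix [Fintype ι] (q lam : F) : Matrix (ι × ι) (ι × ι) F :=
  (lam - lam⁻¹) • 1 + diagonal (fun p => flipWeight q lam (cmp p.1 p.2)) * flipMatrix F ι

variable [Fintype ι]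

theorem trigRMatrix_eq_sum (q lam : F) :
    trigRMatrix ι q lam = ∑ i, ∑ j, ((lam - lam⁻¹) • (single i i 1 ⊗ₖ single j j 1) +
      flipWeight q lam (cmp i j) • (single i j 1 ⊗ₖ single j i 1)) := by
  simp only [trigRMatrix, diagonal_mul_flipMatrix_eq_sum, ← sum_single_one, Fintype.sum_prod_type,
    Finset.smul_sum, Finset.sum_add_distrib, single_kronecker_single, mul_one]

theorem commute_trigRMatrix_kronecker_self_iff_flipWeight_eq {q lam : F} {K : Matrix ι ι F} :
    Commute (trigRMatrix ι q lam) (K ⊗ₖ K) ↔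
      ∀ i j k l, K i k ≠ 0 → K j l ≠ 0 →
        flipWeight q lam (cmp i j) = flipWeight q lam (cmp k l) := by
  have scalar : Commute ((lam - lam⁻¹) • (1 : Matrix (ι × ι) (ι × ι) F)) (K ⊗ₖ K) :=
    (Commute.one_left _).smul_left _
  have drop_scalar : Commute (trigRMatrix ι q lam) (K ⊗ₖ K) ↔
      Commute (diagonal (fun p => flipWeight q lam (cmp p.1 p.2)) * flipMatrix F ι) (K ⊗ₖ K) :=
    ⟨fun h => by simpa only [trigRMatrix, add_sub_cancel_left] using h.sub_left scalar,
      scalar.add_left⟩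
  rw [drop_scalar, commute_mul_left_iff_of_isUnit isUnit_flipMatrix
    (commute_flipMatrix_kronecker_self K), commute_diagonal_iff]
  simp only [Prod.forall, kronecker_apply, mul_ne_zero_iff, and_imp]

theorem HasStrictMonoSupport.commute_trigRMatrix_kronecker_self {K : Matrix ι ι F}
    (hK : HasStrictMonoSupport K) (q lam : F) : Commute (trigRMatrix ι q lam) (K ⊗ₖ K) :=
  commute_trigRMatrix_kronecker_self_iff_flipWeight_eq.mpr fun _ _ _ _ hik hjl =>
    congrArg (flipWeight q lam) (hK hik hjl)

theorem commute_trigRMatrix_kronecker_self_iff {q lam : F} (hq : q ≠ 0) (hq2 : q ^ 2 ≠ 1)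
    (hlam : lam ≠ 0) (hlam2 : lam ^ 2 ≠ 1) {K : Matrix ι ι F} :
    Commute (trigRMatrix ι q lam) (K ⊗ₖ K) ↔ HasStrictMonoSupport K := by
  simp only [commute_trigRMatrix_kronecker_self_iff_flipWeight_eq,
    (flipWeight_injective hq hq2 hlam hlam2).eq_iff, HasStrictMonoSupport]

end TrigRMatrix

section CyclicTwist

theorem RhM_eq_trigRMatrix (q lam : ℂ) : RhM q lam = trigRMatrix (Fin 3) q lam := by
  have weight_eq : flipWeight q lam .eq = (lam * q - (lam * q)⁻¹) - (lam - lam⁻¹) := rfl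
  have weight_lt {i j : Fin 3} (h : i < j) :
      flipWeight q lam (cmp i j) = (q - q⁻¹) * lam := by
    rw [h.cmp_eq_lt, flipWeight]
  have weight_gt {i j : Fin 3} (h : j < i) :
      flipWeight q lam (cmp i j) = (q - q⁻¹) * lam⁻¹ := by
    rw [h.cmp_eq_gt, flipWeight]
  simp only [RhM, Eb, trigRMatrix_eq_sum, Fin.sum_univ_three, Fin.isValue, ↓reduceIte,
    zero_ne_one, Fin.reduceEq, one_ne_zero, not_lt_zero, Fin.reduceLT,
    lt_self_iff_false, cmp_self_eq_eq, weight_eq, zero_lt_one, weight_lt, weight_gt]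
  module

theorem forall_RhM_mul_kronecker_self_eq_iff {q : ℂ} (hq : q ≠ 0) (hq2 : q ^ 2 ≠ 1)
    (K : Matrix (Fin 3) (Fin 3) ℂ) :
    (∀ lam : ℂ, lam ≠ 0 → RhM q lam * (K ⊗ₖ K) = (K ⊗ₖ K) * RhM q lam) ↔
      HasStrictMonoSupport K := by
  simp only [RhM_eq_trigRMatrix, ← commute_iff_eq]
  exact ⟨fun h => (commute_trigRMatrix_kronecker_self_iff hq hq2 two_ne_zero (by norm_num)).mp
    (h 2 two_ne_zero), fun hK lam _ => hK.commute_trigRMatrix_kronecker_self q lam⟩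

theorem transpose_Ktw2 (α β γ : ℂ) : (Ktw2 α β γ)ᵀ = Ktw3 α β γ := by
  simp only [Ktw2, Ktw3, Eb, transpose_add, transpose_smul, transpose_single]
  abel

theorem Ktw2_apply_ne_zero_iff {α β γ : ℂ} {i j : Fin 3} :
    Ktw2 α β γ i j ≠ 0 ↔
      i = 0 ∧ j = 2 ∧ α ≠ 0 ∨ i = 1 ∧ j = 0 ∧ β ≠ 0 ∨ i = 2 ∧ j = 1 ∧ γ ≠ 0 := by
  fin_cases i <;> fin_cases j <;> simp [Ktw2, Eb]

theorem hasStrictMonoSupport_Ktw2_iff {α β γ : ℂ} :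
    HasStrictMonoSupport (Ktw2 α β γ) ↔ α * β = 0 ∧ α * γ = 0 := by
  simp only [HasStrictMonoSupport, Ktw2_apply_ne_zero_iff]
  constructor
  · refine fun h => ⟨by_contra fun hαβ => ?_, by_contra fun hαγ => ?_⟩
    · obtain ⟨hα, hβ⟩ := mul_ne_zero_iff.mp hαβ
      exact absurd (h (.inl ⟨rfl, rfl, hα⟩) (.inr (.inl ⟨rfl, rfl, hβ⟩))) (by decide)
    · obtain ⟨hα, hγ⟩ := mul_ne_zero_iff.mp hαγ
      exact absurd (h (.inl ⟨rfl, rfl, hα⟩) (.inr (.inr ⟨rfl, rfl, hγ⟩))) (by decide)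
  · rintro ⟨hαβ, hαγ⟩ i j k l (⟨rfl, rfl, hi⟩ | ⟨rfl, rfl, hi⟩ | ⟨rfl, rfl, hi⟩)
      (⟨rfl, rfl, hj⟩ | ⟨rfl, rfl, hj⟩ | ⟨rfl, rfl, hj⟩) <;>
      first | rfl | simp_all

theorem hasStrictMonoSupport_Ktw2_iff_eq_zero {α β γ : ℂ} (hβγ : (β, γ) ≠ (0, 0)) :
    HasStrictMonoSupport (Ktw2 α β γ) ↔ α = 0 := by
  rw [hasStrictMonoSupport_Ktw2_iff, mul_eq_zero, mul_eq_zero, ← or_and_left,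
    ← Prod.mk_eq_zero]
  exact or_iff_left hβγ

end CyclicTwist

/-- the cyclic twists are symmetries of the homogeneous gradation
R-matrix if and only if `α = 0`. -/
theorem cyclic_twist_homogeneous_iff (q : ℂ) (hq : q ≠ 0) (hq2 : q ^ 2 ≠ 1)
    (α β γ : ℂ) (hβγ : (β, γ) ≠ (0, 0)) :
    ((∀ lam : ℂ, lam ≠ 0 →
        RhM q lam * (Ktw2 α β γ ⊗ₖ Ktw2 α β γ)
          = (Ktw2 α β γ ⊗ₖ Ktw2 α β γ) * RhM q lam) ↔ α = 0)
    ∧ ((∀ lam : ℂ, lam ≠ 0 →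
        RhM q lam * (Ktw3 α β γ ⊗ₖ Ktw3 α β γ)
          = (Ktw3 α β γ ⊗ₖ Ktw3 α β γ) * RhM q lam) ↔ α = 0) := by
  simp only [forall_RhM_mul_kronecker_self_eq_iff hq hq2, ← transpose_Ktw2,
    hasStrictMonoSupport_transpose_iff, hasStrictMonoSupport_Ktw2_iff_eq_zero hβγ, and_self]
end

section
/- The fusion identity holds at the inhomogeneity points: for every b ∈ {1, …, N}, T₁(ζ_b) T₁(ζ_b/p) = T₂(ζ_b) in End(H). -/
open Matrix Kronecker BigOperators

/-- Index type of the quantum space `H = (ℂ³)^{⊗N}`. -/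
abbrev HIdx (N : ℕ) := Fin N → Fin 3

/-- `R_{a,b}(u)`: the R-matrix acting on the auxiliary space and the `b`-th
factor of the quantum space, identity elsewhere. -/
noncomputable def Raux (N : ℕ) (q u : ℂ) (b : Fin N) :
    Matrix (Fin 3 × HIdx N) (Fin 3 × HIdx N) ℂ :=
  Matrix.of fun x y =>
    RpM q u (x.1, x.2 b) (y.1, y.2 b) * (if ∀ c, c ≠ b → x.2 c = y.2 c then 1 else 0)

/-- The twist matrix acting on the auxiliary space, identity on `H`. -/
noncomputable def Kaux (N : ℕ) (K : Matrix (Fin 3) (Fin 3) ℂ) :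
    Matrix (Fin 3 × HIdx N) (Fin 3 × HIdx N) ℂ :=
  Matrix.of fun x y => K x.1 y.1 * (if x.2 = y.2 then 1 else 0)

/-- Monodromy matrix `M(u) = K_a R_{a,N}(u/ζ_N) ⋯ R_{a,1}(u/ζ_1)`. -/
noncomputable def Mon (N : ℕ) (q : ℂ) (ζ : Fin N → ℂ) (K : Matrix (Fin 3) (Fin 3) ℂ)
    (u : ℂ) : Matrix (Fin 3 × HIdx N) (Fin 3 × HIdx N) ℂ :=
  Kaux N K * (((List.finRange N).reverse.map fun b => Raux N q (u / ζ b) b).prod)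

/-- Transfer matrix `T₁(u) = tr_a M(u)`. -/
noncomputable def T1 (N : ℕ) (q : ℂ) (ζ : Fin N → ℂ) (K : Matrix (Fin 3) (Fin 3) ℂ)
    (u : ℂ) : Matrix (HIdx N) (HIdx N) ℂ :=
  Matrix.of fun f g => ∑ i : Fin 3, Mon N q ζ K u (i, f) (i, g)

/-- The q-antisymmetric projector `P⁻ = R_q(p⁻¹)/(2(q⁻¹ − q))`. -/
noncomputable def Pm (q p : ℂ) : Matrix (Fin 3 × Fin 3) (Fin 3 × Fin 3) ℂ :=
  (2 * (q⁻¹ - q))⁻¹ • RpM q p⁻¹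

/-- Embedding of an operator on (auxiliary space a) ⊗ H into
(aux a) ⊗ (aux b) ⊗ H, identity on aux b. -/
noncomputable def embA (N : ℕ) (M : Matrix (Fin 3 × HIdx N) (Fin 3 × HIdx N) ℂ) :
    Matrix (Fin 3 × Fin 3 × HIdx N) (Fin 3 × Fin 3 × HIdx N) ℂ :=
  Matrix.of fun x y => M (x.1, x.2.2) (y.1, y.2.2) * (if x.2.1 = y.2.1 then 1 else 0)

/-- Embedding of an operator on (auxiliary space b) ⊗ H into
(aux a) ⊗ (aux b) ⊗ H, identity on aux a. -/
noncomputable def embB (N : ℕ) (M : Matrix (Fin 3 × HIdx N) (Fin 3 × HIdx N) ℂ) :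
    Matrix (Fin 3 × Fin 3 × HIdx N) (Fin 3 × Fin 3 × HIdx N) ℂ :=
  Matrix.of fun x y => M (x.2.1, x.2.2) (y.2.1, y.2.2) * (if x.1 = y.1 then 1 else 0)

/-- Embedding of an operator on (aux a) ⊗ (aux b) into (aux a) ⊗ (aux b) ⊗ H. -/
noncomputable def embP (N : ℕ) (P : Matrix (Fin 3 × Fin 3) (Fin 3 × Fin 3) ℂ) :
    Matrix (Fin 3 × Fin 3 × HIdx N) (Fin 3 × Fin 3 × HIdx N) ℂ :=
  Matrix.of fun x y => P (x.1, x.2.1) (y.1, y.2.1) * (if x.2.2 = y.2.2 then 1 else 0)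

/-- Fused transfer matrix `T₂(u) = tr_{ab}(P⁻_{ab} M_b(u) M_a(u/p))`. -/
noncomputable def T2 (N : ℕ) (q p : ℂ) (ζ : Fin N → ℂ) (K : Matrix (Fin 3) (Fin 3) ℂ)
    (u : ℂ) : Matrix (HIdx N) (HIdx N) ℂ :=
  Matrix.of fun f g => ∑ ia : Fin 3, ∑ ib : Fin 3,
    (embP N (Pm q p) * embB N (Mon N q ζ K u) * embA N (Mon N q ζ K (u / p)))
      (ia, ib, f) (ia, ib, g)

/-!
Regard `M_b(ζ_b) M_a(wζ_b)` as an operator on both auxiliary spaces and `H`. Operators on different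
spaces commute, so it is `K_a K_b` times the ordered product over the sites `s` of
`R_bs(ζ_b/ζ_s) R_as(wζ_b/ζ_s)`. At the site `s = b` the first factor is a multiple of the
permutation, so that factor of the product is left divisible by `R_ab(w)`. By the Yang–Baxter
equation and the symmetry of `K`, `R_ab(w)` can be moved to the left through all other factors.
For `w = p⁻¹` the projector `P⁻` fixes `R_ab(w)` and therefore acts trivially on the whole product;
taking traces gives the fusion identity.
-/

section ListProducts

theorem dvd_mul_of_semiconjBy {S : Type*} [Semigroup S] {R x y z : S} (h : SemiconjBy R x y)
    (hz : R ∣ z) : R ∣ y * z := by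
  obtain ⟨w, rfl⟩ := hz
  exact ⟨x * w, by rw [← mul_assoc, ← h.eq, mul_assoc]⟩

variable {ι M : Type*} [Monoid M]

theorem list_prod_map_mul_prod_map {B A : ι → M} {l : List ι}
    (h : l.Pairwise fun s t => Commute (B t) (A s)) :
    (l.map B).prod * (l.map A).prod = (l.map fun s => B s * A s).prod := by
  induction l with
  | nil => simp
  | cons s l ih =>
    obtain ⟨hs, hl⟩ := List.pairwise_cons.1 h
    have hBA : Commute (l.map B).prod (A s) :=
      Commute.list_prod_left _ _ (by simpa using hs)
    simp only [List.map_cons, List.prod_cons]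
    rw [hBA.mul_mul_mul_comm, ih hl]

theorem dvd_list_prod_map_of_semiconjBy {R : M} {X Y : ι → M} {l : List ι}
    (h : ∀ t ∈ l, SemiconjBy R (X t) (Y t)) {s : ι} (hs : s ∈ l) (hR : R ∣ Y s) :
    R ∣ (l.map Y).prod := by
  induction l with
  | nil => simp at hs
  | cons t l ih =>
    rw [List.map_cons, List.prod_cons]
    rcases List.mem_cons.1 hs with rfl | hs
    · exact dvd_mul_of_dvd_left hR _
    · exact dvd_mul_of_semiconjBy (h t List.mem_cons_self)
        (ih (fun r hr => h r (List.mem_cons_of_mem _ hr)) hs)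

end ListProducts

section PartialTrace

variable {m n R : Type*} [Fintype m]

/-- Partial trace over the first tensor factor. -/
def partialTrace [AddCommMonoid R] (X : Matrix (m × n) (m × n) R) : Matrix n n R :=
  Matrix.of fun f g => ∑ i, X (i, f) (i, g)

theorem partialTrace_one_kronecker_mul [NonAssocSemiring R] [DecidableEq m] [Fintype n]
    (A : Matrix n n R) (X : Matrix (m × n) (m × n) R) :
    partialTrace ((1 ⊗ₖ A) * X) = A * partialTrace X := by
  ext f g
  simp only [partialTrace, Matrix.of_apply, Matrix.mul_apply, Fintype.sum_prod_type,
    Matrix.kroneckerMap_apply, Matrix.one_apply, ite_mul, one_mul, zero_mul, Finset.mul_sum]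
  rw [Finset.sum_comm (γ := n)]
  simp

theorem partialTrace_mul_one_kronecker [NonAssocSemiring R] [DecidableEq m] [Fintype n]
    (X : Matrix (m × n) (m × n) R) (A : Matrix n n R) :
    partialTrace (X * (1 ⊗ₖ A)) = partialTrace X * A := by
  ext f g
  simp only [partialTrace, Matrix.of_apply, Matrix.mul_apply, Fintype.sum_prod_type,
    Matrix.kroneckerMap_apply, Matrix.one_apply, ite_mul, one_mul, zero_mul, mul_ite, mul_zero,
    Finset.sum_mul]
  rw [Finset.sum_comm (γ := n)]
  simp

end PartialTrace

/-- Weight `u³q - u⁻³q⁻¹` or `u³ - u⁻³` with which `R_q(u)` preserves `e_i ⊗ e_j`. -/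
noncomputable def diagCoeff (q u : ℂ) (i j : Fin 3) : ℂ :=
  if i = j then u ^ 3 * q - (u ^ 3 * q)⁻¹ else u ^ 3 - (u ^ 3)⁻¹

/-- Weight with which `R_q(u)` exchanges `e_i` and `e_j`. The exponents `±(3 - 2|j - i|)` of `u`
depend only on `j - i` modulo `3`: they are `1` if `j = i + 1` and `-1` if `j = i - 1`. -/
noncomputable def swapCoeff (q u : ℂ) (i j : Fin 3) : ℂ :=
  if i = j then 0 else (q - q⁻¹) * if j = i + 1 then u else u⁻¹

theorem RpM_apply (q u : ℂ) (i j k l : Fin 3) :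
    RpM q u (i, j) (k, l) = (if i = k ∧ j = l then diagCoeff q u i j else 0)
      + (if i = l ∧ j = k then swapCoeff q u i j else 0) := by
  have exp_pos : (3 : ℤ) - 2 = 1 := by norm_num
  have exp_neg : (2 : ℤ) - 3 = -1 := by norm_num
  unfold RpM diagCoeff swapCoeff Eb
  simp only [Fin.sum_univ_three]
  fin_cases i <;> fin_cases j <;> fin_cases k <;> fin_cases l <;>
    simp [exp_pos, exp_neg]

theorem RpM_mulVec (q u : ℂ) (f : Fin 3 × Fin 3 → ℂ) (i j : Fin 3) :
    (RpM q u *ᵥ f) (i, j) = diagCoeff q u i j * f (i, j) + swapCoeff q u i j * f (j, i) := by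
  simp only [Matrix.mulVec, dotProduct, Fintype.sum_prod_type, RpM_apply, add_mul,
    Finset.sum_add_distrib, ite_mul, zero_mul, ite_and]
  congr 1 <;> simp

theorem swapCoeff_mul_swapCoeff_swap {q u : ℂ} (hu : u ≠ 0) {i j : Fin 3} (h : i ≠ j) :
    swapCoeff q u i j * swapCoeff q u j i = (q - q⁻¹) ^ 2 := by
  fin_cases i <;> fin_cases j <;> simp [swapCoeff] at h ⊢ <;> field_simp

theorem RpM_one_mulVec (q : ℂ) (f : Fin 3 × Fin 3 → ℂ) (i j : Fin 3) :
    (RpM q 1 *ᵥ f) (i, j) = (q - q⁻¹) * f (j, i) := by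
  rw [RpM_mulVec]
  by_cases h : i = j <;> simp [diagCoeff, swapCoeff, h]

theorem RpM_inv_mul_self {q p : ℂ} (hp0 : p ≠ 0) (hp : p ^ 3 = q) :
    RpM q p⁻¹ * RpM q p⁻¹ = (2 * (q⁻¹ - q)) • RpM q p⁻¹ := by
  refine Matrix.ext_iff_mulVec.2 fun f => funext fun ⟨i, j⟩ => ?_
  simp only [← Matrix.mulVec_mulVec, Matrix.smul_mulVec, Pi.smul_apply, smul_eq_mul, RpM_mulVec]
  have hpq : p⁻¹ ^ 3 = q⁻¹ := by rw [inv_pow, hp]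
  have hq : q ≠ 0 := hp ▸ pow_ne_zero 3 hp0
  by_cases hij : i = j
  · simp [diagCoeff, swapCoeff, hij, hpq, hq]
  · have hD : diagCoeff q p⁻¹ i j = q⁻¹ - q := by simp [diagCoeff, hij, hpq]
    have hD' : diagCoeff q p⁻¹ j i = q⁻¹ - q := by simp [diagCoeff, Ne.symm hij, hpq]
    rw [hD, hD']
    linear_combination f (i, j) * swapCoeff_mul_swapCoeff_swap (inv_ne_zero hp0) hij

theorem Pm_mul_RpM_inv {q p : ℂ} (hq : q ≠ 0) (hq2 : q ^ 2 ≠ 1) (hp : p ^ 3 = q) :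
    Pm q p * RpM q p⁻¹ = RpM q p⁻¹ := by
  have hp0 : p ≠ 0 := ne_zero_pow three_ne_zero (hp ▸ hq)
  have hc : 2 * (q⁻¹ - q) ≠ 0 := by
    refine mul_ne_zero two_ne_zero fun h => hq2 ?_
    field_simp at h
    linear_combination -h
  rw [Pm, Matrix.smul_mul, RpM_inv_mul_self hp0 hp, smul_smul, inv_mul_cancel₀ hc, one_smul]

section Embeddings

variable (N : ℕ)

theorem embB_eq_one_kronecker (M : Matrix (Fin 3 × HIdx N) (Fin 3 × HIdx N) ℂ) :
    embB N M = 1 ⊗ₖ M := by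
  ext x y
  simp [embB, Matrix.one_apply]

theorem embA_mulVec (M : Matrix (Fin 3 × HIdx N) (Fin 3 × HIdx N) ℂ)
    (f : Fin 3 × Fin 3 × HIdx N → ℂ) (a b : Fin 3) (x : HIdx N) :
    (embA N M *ᵥ f) (a, b, x) = (M *ᵥ fun z => f (z.1, b, z.2)) (a, x) := by
  simp only [Matrix.mulVec, dotProduct, Fintype.sum_prod_type, embA, Matrix.of_apply]
  refine Finset.sum_congr rfl fun i _ => ?_
  rw [Finset.sum_comm]
  simp

theorem embB_mulVec (M : Matrix (Fin 3 × HIdx N) (Fin 3 × HIdx N) ℂ)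
    (f : Fin 3 × Fin 3 × HIdx N → ℂ) (a b : Fin 3) (x : HIdx N) :
    (embB N M *ᵥ f) (a, b, x) = (M *ᵥ fun z => f (a, z)) (b, x) := by
  simp only [Matrix.mulVec, dotProduct, Fintype.sum_prod_type, embB, Matrix.of_apply]
  simp [← Fintype.sum_prod_type']

theorem embP_mulVec (P : Matrix (Fin 3 × Fin 3) (Fin 3 × Fin 3) ℂ)
    (f : Fin 3 × Fin 3 × HIdx N → ℂ) (a b : Fin 3) (x : HIdx N) :
    (embP N P *ᵥ f) (a, b, x) = (P *ᵥ fun z => f (z.1, z.2, x)) (a, b) := by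
  simp [Matrix.mulVec, dotProduct, Fintype.sum_prod_type, embP]

theorem Kaux_mulVec (K : Matrix (Fin 3) (Fin 3) ℂ) (f : Fin 3 × HIdx N → ℂ)
    (i : Fin 3) (x : HIdx N) :
    (Kaux N K *ᵥ f) (i, x) = ∑ j, K i j * f (j, x) := by
  simp [Matrix.mulVec, dotProduct, Fintype.sum_prod_type, Kaux]

theorem Raux_mulVec (q u : ℂ) (s : Fin N) (f : Fin 3 × HIdx N → ℂ) (i : Fin 3) (x : HIdx N) :
    (Raux N q u s *ᵥ f) (i, x)
      = (RpM q u *ᵥ fun z => f (z.1, Function.update x s z.2)) (i, x s) := by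
  simp only [Matrix.mulVec, dotProduct, Fintype.sum_prod_type, Raux, Matrix.of_apply,
    mul_ite, mul_one, mul_zero, ite_mul, zero_mul]
  have hfiber : ({y | ∀ c, c ≠ s → x c = y c} : Finset (HIdx N))
      = Finset.univ.image (Function.update x s) := by
    ext y
    simp [Function.update_eq_iff]
  refine Finset.sum_congr rfl fun j _ => ?_
  rw [← Finset.sum_filter, hfiber, Finset.sum_image (Function.update_injective x s).injOn]
  simp only [Function.update_self]

/-- `embA N` as a monoid homomorphism, to be applied to the products defining monodromy
matrices. -/
noncomputable def embAHom : Matrix (Fin 3 × HIdx N) (Fin 3 × HIdx N) ℂ →*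
    Matrix (Fin 3 × Fin 3 × HIdx N) (Fin 3 × Fin 3 × HIdx N) ℂ where
  toFun := embA N
  map_one' := Matrix.ext_iff_mulVec.2 fun f => funext fun ⟨a, b, x⟩ => by simp [embA_mulVec]
  map_mul' M M' := Matrix.ext_iff_mulVec.2 fun f => funext fun ⟨a, b, x⟩ => by
    simp only [← Matrix.mulVec_mulVec, embA_mulVec]

/-- `embB N` as a monoid homomorphism, to be applied to the products defining monodromy
matrices. -/
noncomputable def embBHom : Matrix (Fin 3 × HIdx N) (Fin 3 × HIdx N) ℂ →*
    Matrix (Fin 3 × Fin 3 × HIdx N) (Fin 3 × Fin 3 × HIdx N) ℂ where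
  toFun := embB N
  map_one' := by rw [embB_eq_one_kronecker, Matrix.one_kronecker_one]
  map_mul' M M' := by
    simp only [embB_eq_one_kronecker, ← Matrix.mul_kronecker_mul, mul_one]

theorem embP_mul (P P' : Matrix (Fin 3 × Fin 3) (Fin 3 × Fin 3) ℂ) :
    embP N (P * P') = embP N P * embP N P' :=
  Matrix.ext_iff_mulVec.2 fun f => funext fun ⟨a, b, x⟩ => by
    simp only [← Matrix.mulVec_mulVec, embP_mulVec]

end Embeddings

section LocalRelations

variable (N : ℕ) (q u v : ℂ) (K : Matrix (Fin 3) (Fin 3) ℂ)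

theorem commute_embB_Raux_embA_Raux {s t : Fin N} (h : s ≠ t) :
    Commute (embB N (Raux N q u s)) (embA N (Raux N q v t)) :=
  Matrix.ext_iff_mulVec.2 fun f => funext fun ⟨a, b, x⟩ => by
    simp only [← Matrix.mulVec_mulVec, embA_mulVec, embB_mulVec, Raux_mulVec, RpM_mulVec,
      Function.update_of_ne h, Function.update_of_ne h.symm, Function.update_comm h]
    ring

theorem commute_embB_Raux_embA_Kaux (s : Fin N) :
    Commute (embB N (Raux N q u s)) (embA N (Kaux N K)) :=
  Matrix.ext_iff_mulVec.2 fun f => funext fun ⟨a, b, x⟩ => by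
    simp only [← Matrix.mulVec_mulVec, embA_mulVec, embB_mulVec, Raux_mulVec, RpM_mulVec,
      Kaux_mulVec, mul_add, Finset.sum_add_distrib, Finset.mul_sum, mul_left_comm]

theorem embB_Kaux_mul_embA_Kaux :
    embB N (Kaux N K) * embA N (Kaux N K) = embP N (K ⊗ₖ K) :=
  Matrix.ext_iff_mulVec.2 fun f => funext fun ⟨a, b, x⟩ => by
    simp only [← Matrix.mulVec_mulVec, embA_mulVec, embB_mulVec, embP_mulVec, Kaux_mulVec]
    simp only [Matrix.mulVec, dotProduct, Fintype.sum_prod_type, Matrix.kroneckerMap_apply,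
      Finset.mul_sum, mul_assoc, mul_left_comm]
    exact Finset.sum_comm

variable {q u v}

theorem yangBaxter_semiconjBy (hq : q ≠ 0) (hu : u ≠ 0) (hv : v ≠ 0) (s : Fin N) :
    SemiconjBy (embP N (RpM q u)) (embA N (Raux N q (u * v) s) * embB N (Raux N q v s))
      (embB N (Raux N q v s) * embA N (Raux N q (u * v) s)) := by
  refine Matrix.ext_iff_mulVec.2 fun f => funext fun ⟨a, b, x⟩ => ?_
  simp only [← Matrix.mulVec_mulVec, embA_mulVec, embB_mulVec, embP_mulVec, Raux_mulVec,
    RpM_mulVec, Function.update_self, Function.update_idem]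
  obtain ⟨F, hF⟩ : ∃ F : Fin 3 → Fin 3 → Fin 3 → ℂ,
      ∀ i j k, f (i, j, Function.update x s k) = F i j k := ⟨_, fun _ _ _ => rfl⟩
  simp only [hF]
  generalize x s = c
  fin_cases a <;> fin_cases b <;> fin_cases c <;>
    simp [diagCoeff, swapCoeff] <;> field_simp <;> ring

variable (q u)

theorem embB_Raux_one_mul_embA_Raux (s : Fin N) :
    embB N (Raux N q 1 s) * embA N (Raux N q u s)
      = embP N (RpM q u) * embB N (Raux N q 1 s) :=
  Matrix.ext_iff_mulVec.2 fun f => funext fun ⟨a, b, x⟩ => by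
    simp only [← Matrix.mulVec_mulVec, embA_mulVec, embB_mulVec, embP_mulVec, Raux_mulVec,
      RpM_one_mulVec]
    simp only [RpM_mulVec, Function.update_self, Function.update_idem]
    ring

end LocalRelations

section Monodromy

variable (N : ℕ) (q : ℂ) (ζ : Fin N → ℂ) (K : Matrix (Fin 3) (Fin 3) ℂ)

theorem embA_Mon (u : ℂ) :
    embA N (Mon N q ζ K u) = embA N (Kaux N K) *
      ((List.finRange N).reverse.map fun s => embA N (Raux N q (u / ζ s) s)).prod := by
  change embAHom N (Mon N q ζ K u) = _
  rw [Mon, map_mul, map_list_prod, List.map_map]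
  rfl

theorem embB_Mon (u : ℂ) :
    embB N (Mon N q ζ K u) = embB N (Kaux N K) *
      ((List.finRange N).reverse.map fun s => embB N (Raux N q (u / ζ s) s)).prod := by
  change embBHom N (Mon N q ζ K u) = _
  rw [Mon, map_mul, map_list_prod, List.map_map]
  rfl

theorem embB_Mon_mul_embA_Mon (u v : ℂ) :
    embB N (Mon N q ζ K u) * embA N (Mon N q ζ K v)
      = embP N (K ⊗ₖ K) * ((List.finRange N).reverse.map fun s =>
          embB N (Raux N q (u / ζ s) s) * embA N (Raux N q (v / ζ s) s)).prod := by
  have hRK : Commute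
      ((List.finRange N).reverse.map fun s => embB N (Raux N q (u / ζ s) s)).prod
      (embA N (Kaux N K)) :=
    Commute.list_prod_left _ _ <| List.forall_mem_map.2 fun s _ =>
      commute_embB_Raux_embA_Kaux N q _ K s
  have hnodup : (List.finRange N).reverse.Nodup := List.nodup_reverse.2 (List.nodup_finRange N)
  rw [embA_Mon, embB_Mon, hRK.mul_mul_mul_comm, embB_Kaux_mul_embA_Kaux,
    list_prod_map_mul_prod_map]
  exact hnodup.imp fun hst => commute_embB_Raux_embA_Raux N q _ _ hst.symm

variable {q ζ K}

theorem embP_RpM_dvd_embB_Mon_mul_embA_Mon (hq : q ≠ 0) (hζ : ∀ s, ζ s ≠ 0) {w : ℂ}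
    (hw : w ≠ 0) (hK : Commute (RpM q w) (K ⊗ₖ K)) (b : Fin N) :
    embP N (RpM q w) ∣ embB N (Mon N q ζ K (ζ b)) * embA N (Mon N q ζ K (w * ζ b)) := by
  have hPK : Commute (embP N (RpM q w)) (embP N (K ⊗ₖ K)) := by
    rw [Commute, SemiconjBy, ← embP_mul, hK.eq, embP_mul]
  rw [embB_Mon_mul_embA_Mon]
  refine dvd_mul_of_semiconjBy hPK
    (dvd_list_prod_map_of_semiconjBy
      (X := fun s => embA N (Raux N q (w * ζ b / ζ s) s) * embB N (Raux N q (ζ b / ζ s) s))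
      (fun s _ => ?_) (s := b) (by simp) ?_)
  · rw [mul_div_assoc]
    exact yangBaxter_semiconjBy N hq hw (div_ne_zero (hζ b) (hζ s)) s
  · rw [mul_div_assoc, div_self (hζ b), mul_one, embB_Raux_one_mul_embA_Raux]
    exact dvd_mul_right _ _

end Monodromy

section TransferMatrix

variable (N : ℕ) (q p : ℂ) (ζ : Fin N → ℂ) (K : Matrix (Fin 3) (Fin 3) ℂ) (u v : ℂ)

theorem partialTrace_embA (M : Matrix (Fin 3 × HIdx N) (Fin 3 × HIdx N) ℂ) :
    partialTrace (embA N M) = 1 ⊗ₖ partialTrace M := by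
  ext x y
  simp [partialTrace, embA, Matrix.one_apply]

theorem T1_mul_T1 :
    T1 N q ζ K u * T1 N q ζ K v
      = partialTrace (partialTrace (embB N (Mon N q ζ K u) * embA N (Mon N q ζ K v))) := by
  rw [embB_eq_one_kronecker, partialTrace_one_kronecker_mul, partialTrace_embA,
    partialTrace_mul_one_kronecker]
  rfl

theorem T2_eq_partialTrace :
    T2 N q p ζ K u = partialTrace (partialTrace
      (embP N (Pm q p) * embB N (Mon N q ζ K u) * embA N (Mon N q ζ K (u / p)))) := by
  ext f g
  simp only [T2, partialTrace, Matrix.of_apply]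
  exact Finset.sum_comm

end TransferMatrix

theorem fusion_identity_at_inhomogeneities_general (N : ℕ) (q p : ℂ)
    (hq : q ≠ 0) (hq2 : q ^ 2 ≠ 1) (hp : p ^ 3 = q)
    (ζ : Fin N → ℂ) (hζ : ∀ b, ζ b ≠ 0) (K : Matrix (Fin 3) (Fin 3) ℂ)
    (hK : Commute (RpM q p⁻¹) (K ⊗ₖ K)) (b : Fin N) :
    T1 N q ζ K (ζ b) * T1 N q ζ K (ζ b / p) = T2 N q p ζ K (ζ b) := by
  have hp0 : p⁻¹ ≠ 0 := inv_ne_zero (ne_zero_pow three_ne_zero (hp ▸ hq))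
  obtain ⟨X, hX⟩ := embP_RpM_dvd_embB_Mon_mul_embA_Mon N hq hζ hp0 hK b
  rw [inv_mul_eq_div] at hX
  rw [T1_mul_T1, T2_eq_partialTrace, mul_assoc, hX, ← mul_assoc, ← embP_mul,
    Pm_mul_RpM_inv hq hq2 hp]

/-- fusion identity at the inhomogeneity points:
`T₁(ζ_b) T₁(ζ_b/p) = T₂(ζ_b)`. -/
theorem fusion_identity_at_inhomogeneities (N : ℕ) (hN : 1 ≤ N) (q p : ℂ)
    (hq : q ≠ 0) (hq2 : q ^ 2 ≠ 1) (hp : p ^ 3 = q)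
    (ζ : Fin N → ℂ) (hζ : ∀ b, ζ b ≠ 0) (K : Matrix (Fin 3) (Fin 3) ℂ)
    (hK : ∀ w : ℂ, w ≠ 0 → RpM q w * (K ⊗ₖ K) = (K ⊗ₖ K) * RpM q w)
    (b : Fin N) :
    T1 N q ζ K (ζ b) * T1 N q ζ K (ζ b / p) = T2 N q p ζ K (ζ b) :=
  fusion_identity_at_inhomogeneities_general N q p hq hq2 hp ζ hζ K
    (hK p⁻¹ (inv_ne_zero (ne_zero_pow three_ne_zero (hp ▸ hq)))) b
end
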